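/- Let n ≥ 1, let φ : ℂ^n → ℂ be a smooth (C^∞) function with compact support, and let m_1,…,m_n be natural numbers. Then there exist δ > 0 and a function g : ℂ^n → ℂ analytic on the open set {s = (s_1,…,s_n) ∈ ℂ^n : Re s_k > −δ for all k} such that for every s ∈ ℂ^n with Re s_k > m_k/2 for all k, the function z ↦ Π_{k=1}^n ‖z_k‖^{2 s_k} · z_k^{−m_k} · φ(z) is integrable on ℂ^n and g(s) = ∫_{ℂ^n} Π_{k=1}^n ‖z_k‖^{2 s_k} · z_k^{−m_k} · φ(z) dV(z). Moreover, if m_1 = ⋯ = m_n = 0 then g(0) = ∫_{ℂ^n} φ dV. -/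

import Mathlib

/-!
Integrating by parts in `∂/∂z̄_k` raises the exponents, because for large real parts the kernel
`|z_k|^{2 s_k + 2} z_k^{-m_k - 1}` has `z̄_k`-derivative `(s_k + 1) |z_k|^{2 s_k} z_k^{-m_k}`. With
`Z(φ, m, s)` denoting the integral, this gives
`(s_k + 1) Z(φ, m, s) = -Z(∂φ/∂z̄_k, m + e_k, s + e_k)`,
which persists by analyticity on the whole orthant `Re s_j > m_j / 2 - 1` of absolute convergence.
Reading the identity from right to left pushes the threshold for `s_k` down by `1/2`, at the price
of a pole at `s_k = -1`; after `m_k` steps in each direction `k` it has come down to `-1`.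
Joint analyticity of `Z` where it converges is that of a Laplace transform: a change `t` in `s`
multiplies the integrand by `exp (∑ k, log |z_k|² t_k)`, whose power series in `t` can be integrated
term by term.
-/

section PowerSeries

open MeasureTheory
open scoped NNReal

variable {α E F : Type*} [MeasurableSpace α] {μ : Measure α}
  [NormedAddCommGroup E] [NormedAddCommGroup F]

theorem hasFPowerSeriesOnBall_integral {𝕜 : Type*} [RCLike 𝕜] [NormedSpace 𝕜 E]
    [NormedSpace ℝ F] [NormedSpace 𝕜 F] [CompleteSpace F]
    {f : E → α → F} {p : α → FormalMultilinearSeries 𝕜 E F} {x₀ : E} {r : ℝ≥0} (hr : 0 < r)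
    (hf : ∀ᵐ a ∂μ, HasFPowerSeriesOnBall (f · a) (p a) x₀ r)
    (hp : ∀ j, AEStronglyMeasurable (p · j) μ)
    {b : ℕ → α → ℝ} {B : α → ℝ} (hpb : ∀ j, ∀ᵐ a ∂μ, ‖p a j‖ * (r : ℝ) ^ j ≤ b j a)
    (hbB : ∀ᵐ a ∂μ, HasSum (b · a) (B a)) (hB : Integrable B μ) :
    HasFPowerSeriesOnBall (fun y => ∫ a, f y a ∂μ) (fun j => ∫ a, p a j ∂μ) x₀ r := by
  have hpB : ∀ j, ∀ᵐ a ∂μ, ‖p a j‖ * (r : ℝ) ^ j ≤ B a := fun j => by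
    filter_upwards [ae_all_iff.2 hpb, hbB] with a ha hsum
    exact (ha j).trans (le_hasSum hsum j fun i _ => le_trans (by positivity) (ha i))
  have hpint : ∀ j, Integrable (p · j) μ := fun j => by
    refine (hB.const_mul ((r : ℝ) ^ j)⁻¹).mono' (hp j) ?_
    filter_upwards [hpB j] with a ha
    rwa [inv_mul_eq_div, le_div_iff₀ (pow_pos (mod_cast hr) j)]
  refine ⟨FormalMultilinearSeries.le_radius_of_bound _ (∫ a, B a ∂μ) fun j => ?_,
    by exact_mod_cast hr, fun {y} hy => ?_⟩
  · calc ‖∫ a, p a j ∂μ‖ * (r : ℝ) ^ j ≤ (∫ a, ‖p a j‖ ∂μ) * (r : ℝ) ^ j := by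
          gcongr; exact norm_integral_le_integral_norm _
      _ = ∫ a, ‖p a j‖ * (r : ℝ) ^ j ∂μ := (integral_mul_const _ _).symm
      _ ≤ ∫ a, B a ∂μ := integral_mono_ae ((hpint j).norm.mul_const _) hB (hpB j)
  · have hyr : ‖y‖ < r := by simpa using hy
    simp_rw [fun j => ContinuousMultilinearMap.integral_apply (hpint j)]
    refine hasSum_integral_of_dominated_convergence b (fun j => ?_) (fun j => ?_)
      (hbB.mono fun a ha => ha.summable) (hB.congr (hbB.mono fun a ha => ha.tsum_eq.symm))
      (hf.mono fun a ha => ha.hasSum hy)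
    · exact ((ContinuousMultilinearMap.apply 𝕜 (fun _ : Fin j => E) F
        fun _ => y).integrable_comp (hpint j)).aestronglyMeasurable
    · filter_upwards [hpb j] with a ha
      refine ((p a j).le_opNorm _).trans (le_trans ?_ ha)
      rw [Finset.prod_const, Finset.card_univ, Fintype.card_fin]
      gcongr

variable [NormedSpace ℂ E] [NormedSpace ℂ F]

/-- The power series of `h ↦ exp (L h) • v` at the origin. -/
noncomputable def expCLMSeries (L : E →L[ℂ] ℂ) (v : F) : FormalMultilinearSeries ℂ E F :=
  (ContinuousLinearMap.toSpanSingleton ℂ v).compFormalMultilinearSeries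
    ((NormedSpace.expSeries ℂ ℂ).compContinuousLinearMap L)

theorem hasFPowerSeriesOnBall_expCLMSeries (L : E →L[ℂ] ℂ) (v : F) :
    HasFPowerSeriesOnBall (fun h => Complex.exp (L h) • v) (expCLMSeries L v) 0 ⊤ := by
  have hexp : HasFPowerSeriesOnBall Complex.exp (NormedSpace.expSeries ℂ ℂ) (L 0) ⊤ := by
    rw [map_zero, Complex.exp_eq_exp_ℂ]
    exact NormedSpace.exp_hasFPowerSeriesOnBall
  have hcomp := hexp.compContinuousLinearMap
  rw [ENNReal.top_div_of_ne_top enorm_ne_top] at hcomp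
  exact (ContinuousLinearMap.toSpanSingleton ℂ v).comp_hasFPowerSeriesOnBall hcomp

theorem norm_expCLMSeries_le (L : E →L[ℂ] ℂ) (v : F) (j : ℕ) :
    ‖expCLMSeries L v j‖ ≤ ‖L‖ ^ j / j.factorial * ‖v‖ := by
  have hcomp := (NormedSpace.expSeries ℂ ℂ j).norm_compContinuousLinearMap_le fun _ => L
  have hexp : ‖NormedSpace.expSeries ℂ ℂ j‖ = (j.factorial : ℝ)⁻¹ := by
    simp [NormedSpace.expSeries, norm_smul]
  rw [hexp, Finset.prod_const, Finset.card_univ, Fintype.card_fin] at hcomp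
  refine (ContinuousLinearMap.norm_compContinuousMultilinearMap_le _ _).trans ?_
  rw [ContinuousLinearMap.norm_toSpanSingleton, mul_comm, div_eq_inv_mul]
  exact mul_le_mul_of_nonneg_right hcomp (norm_nonneg v)

theorem continuous_expCLMSeries (j : ℕ) :
    Continuous fun x : (E →L[ℂ] ℂ) × F => expCLMSeries x.1 x.2 j := by
  have hcomp : Continuous fun L : E →L[ℂ] ℂ =>
      (NormedSpace.expSeries ℂ ℂ j).compContinuousLinearMap fun _ => L :=
    (ContinuousLinearMap.apply ℂ _ (NormedSpace.expSeries ℂ ℂ j)).continuous.comp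
      ((ContinuousMultilinearMap.compContinuousLinearMapContinuousMultilinear ℂ
        (fun _ : Fin j => E) (fun _ => ℂ) ℂ).cont.comp (by fun_prop))
  exact ((ContinuousMultilinearMap.smulRightL ℂ (fun _ : Fin j => E) F).continuous.comp
    (hcomp.comp continuous_fst)).clm_apply continuous_snd

variable {L : α → E →L[ℂ] ℂ} {f : α → F}

theorem aestronglyMeasurable_expCLMSeries (hL : AEStronglyMeasurable L μ)
    (hf : AEStronglyMeasurable f μ) (j : ℕ) :
    AEStronglyMeasurable (fun a => expCLMSeries (L a) (f a) j) μ := by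
  have hcomp := (continuous_expCLMSeries (E := E) (F := F) j).comp_aestronglyMeasurable
    (hL.prodMk hf)
  exact hcomp

theorem analyticAt_integral_exp_clm_smul [CompleteSpace F] (hL : AEStronglyMeasurable L μ)
    (hf : AEStronglyMeasurable f μ) {r : ℝ} (hr : 0 < r)
    (hint : Integrable (fun a => Real.exp (r * ‖L a‖) * ‖f a‖) μ) :
    AnalyticAt ℂ (fun h => ∫ a, Complex.exp (L a h) • f a ∂μ) 0 := by
  lift r to ℝ≥0 using hr.le
  have hr₀ : (0 : ENNReal) < r := by exact_mod_cast hr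
  have hseries : ∀ a, HasFPowerSeriesOnBall (fun h => Complex.exp (L a h) • f a)
      (expCLMSeries (L a) (f a)) 0 r := fun a =>
    (hasFPowerSeriesOnBall_expCLMSeries (L a) (f a)).mono hr₀ le_top
  refine (hasFPowerSeriesOnBall_integral (by exact_mod_cast hr) (.of_forall hseries)
    (aestronglyMeasurable_expCLMSeries hL hf)
    (b := fun j a => (r * ‖L a‖) ^ j / j.factorial * ‖f a‖)
    (fun j => .of_forall fun a => ?_) (.of_forall fun a => ?_) hint).analyticAt
  · calc ‖expCLMSeries (L a) (f a) j‖ * (r : ℝ) ^ j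
        ≤ (‖L a‖ ^ j / j.factorial * ‖f a‖) * (r : ℝ) ^ j := by
          gcongr; exact norm_expCLMSeries_le _ _ _
      _ = (r * ‖L a‖) ^ j / j.factorial * ‖f a‖ := by ring
  · rw [Real.exp_eq_exp_ℝ]
    exact (NormedSpace.expSeries_div_hasSum_exp (r * ‖L a‖)).mul_right _

end PowerSeries

section ProductMeasure

open MeasureTheory

variable {ι : Type*} [Fintype ι] {X : ι → Type*} [∀ i, MeasurableSpace (X i)]
  {μ : ∀ i, Measure (X i)} [∀ i, SigmaFinite (μ i)]

theorem locallyIntegrable_fintypeProd {𝕜 : Type*} [NormedCommRing 𝕜]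
    [∀ i, TopologicalSpace (X i)] {f : ∀ i, X i → 𝕜} (hf : ∀ i, LocallyIntegrable (f i) (μ i)) :
    LocallyIntegrable (fun x : ∀ i, X i => ∏ i, f i (x i)) (Measure.pi μ) := fun x => by
  choose u hu hfu using fun i => hf i (x i)
  refine ⟨Set.univ.pi u, set_pi_mem_nhds Set.finite_univ fun i _ => hu i, ?_⟩
  rw [IntegrableOn, Measure.restrict_pi_pi]
  exact Integrable.fintype_prod_dep hfu

theorem ae_forall_eval_ne [∀ i, NullSingletonClass (μ i)] (x : ∀ i, X i) :
    ∀ᵐ y ∂Measure.pi μ, ∀ i, y i ≠ x i :=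
  ae_all_iff.2 fun i => Measure.ae_eval_ne (μ := μ) i (x i)

end ProductMeasure

section RightOrthant

open Filter Topology

variable {ι : Type*}

/-- The right orthant of `ℂ^ι` with corner `a`, the product of the half-planes `a k < Re s_k`. -/
def rightOrthant (a : ι → ℝ) : Set (ι → ℂ) :=
  {s | ∀ k, a k < (s k).re}

variable {a b : ι → ℝ} {s : ι → ℂ}

theorem rightOrthant_anti (h : a ≤ b) : rightOrthant b ⊆ rightOrthant a :=
  fun _ hs k => (h k).trans_lt (hs k)

theorem isOpen_rightOrthant [Finite ι] (a : ι → ℝ) : IsOpen (rightOrthant a) := by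
  simp only [rightOrthant, Set.ofPred_forall]
  exact isOpen_iInter_of_finite fun k =>
    isOpen_lt continuous_const (Complex.continuous_re.comp (continuous_apply k))

theorem convex_rightOrthant (a : ι → ℝ) : Convex ℝ (rightOrthant a) := by
  simp only [rightOrthant, Set.ofPred_forall]
  exact convex_iInter fun k =>
    (convex_halfSpace_re_gt (a k)).linear_preimage (LinearMap.proj k : (ι → ℂ) →ₗ[ℝ] ℂ)

theorem exists_pos_forall_lt_re_sub [Finite ι] (hs : s ∈ rightOrthant a) :
    ∃ r > 0, ∀ k, a k < (s k).re - r := by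
  have hsmall : ∀ᶠ r in 𝓝[>] (0 : ℝ), ∀ k, a k < (s k).re - r := eventually_all.2 fun k =>
    ((eventually_lt_nhds (sub_pos.2 (hs k))).filter_mono nhdsWithin_le_nhds).mono fun r hr =>
      lt_sub_comm.1 hr
  exact (eventually_mem_nhdsWithin.and hsmall).exists

theorem add_single_mem_rightOrthant [DecidableEq ι] {k : ι} (hs : s ∈ rightOrthant a)
    (hk : b k ≤ a k + 1) (hb : ∀ j ≠ k, b j ≤ a j) : s + Pi.single k 1 ∈ rightOrthant b := by
  intro j
  rcases eq_or_ne j k with rfl | hjk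
  · simpa using hk.trans_lt (add_lt_add_left (hs j) 1)
  · simpa [hjk] using (hb j hjk).trans_lt (hs j)

end RightOrthant

section PowKernel

open MeasureTheory
open scoped ComplexConjugate

/-- The one-variable kernel `|z|^{2s} z^{-m}`. -/
noncomputable def powKernel (s : ℂ) (m : ℤ) (z : ℂ) : ℂ :=
  ((‖z‖ ^ 2 : ℝ) : ℂ) ^ s * z ^ (-m)

/-- The real derivative of `powKernel s m` at `z`, as a combination of `dz` and `dz̄`. -/
noncomputable def powKernelFDeriv (s : ℂ) (m : ℤ) (z : ℂ) : ℂ →L[ℝ] ℂ :=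
  ((s - m) * powKernel s (m + 1) z) • .id ℝ ℂ +
    (s * powKernel (s - 1) (m - 1) z) • (Complex.conjCLE : ℂ →L[ℝ] ℂ)

variable (s : ℂ) (m : ℤ)

theorem powKernelFDeriv_apply (z v : ℂ) : powKernelFDeriv s m z v =
    (s - m) * powKernel s (m + 1) z * v + s * powKernel (s - 1) (m - 1) z * conj v :=
  rfl

theorem norm_powKernel_le (z : ℂ) : ‖powKernel s m z‖ ≤ ‖z‖ ^ (2 * s.re - m) := by
  rcases eq_or_ne z 0 with rfl | hz
  · rcases eq_or_ne s 0 with rfl | hs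
    · rcases eq_or_ne m 0 with rfl | hm
      · simp [powKernel]
      · simpa [powKernel, zero_zpow _ (neg_ne_zero.2 hm)] using Real.rpow_nonneg le_rfl _
    · simpa [powKernel, hs] using Real.rpow_nonneg le_rfl _
  · have hpos : 0 < ‖z‖ := norm_pos_iff.2 hz
    rw [powKernel, norm_mul, norm_zpow, Complex.norm_cpow_eq_rpow_re_of_pos (pow_pos hpos 2),
      ← Real.rpow_natCast_mul hpos.le, ← Real.rpow_intCast, ← Real.rpow_add hpos, Int.cast_neg,
      ← sub_eq_add_neg, Nat.cast_ofNat]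

@[fun_prop]
theorem measurable_powKernel : Measurable (powKernel s m) := by
  unfold powKernel
  fun_prop

theorem powKernel_add_left (t : ℂ) {z : ℂ} (hz : z ≠ 0) :
    powKernel (s + t) m z = Complex.exp (Real.log (‖z‖ ^ 2) * t) * powKernel s m z := by
  have hne : ((‖z‖ ^ 2 : ℝ) : ℂ) ≠ 0 := by exact_mod_cast pow_ne_zero 2 (norm_ne_zero_iff.2 hz)
  rw [powKernel, powKernel, Complex.cpow_add _ _ hne, mul_comm (_ ^ s), mul_assoc,
    Complex.cpow_def_of_ne_zero hne, Complex.ofReal_log (sq_nonneg _)]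

theorem exp_mul_abs_log_mul_norm_powKernel_le (r : ℝ) {z : ℂ} (hz : z ≠ 0) :
    Real.exp (r * |Real.log (‖z‖ ^ 2)|) * ‖powKernel s m z‖ ≤
      ‖powKernel (s + r) m z‖ + ‖powKernel (s - r) m z‖ := by
  have habs : r * |Real.log (‖z‖ ^ 2)| ≤ |Real.log (‖z‖ ^ 2) * r| := by
    rw [abs_mul, mul_comm]
    gcongr
    exact le_abs_self r
  rw [sub_eq_add_neg, powKernel_add_left s m _ hz, powKernel_add_left s m _ hz, norm_mul, norm_mul,
    Complex.norm_exp, Complex.norm_exp, ← add_mul, Complex.re_ofReal_mul, Complex.re_ofReal_mul,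
    Complex.neg_re, Complex.ofReal_re, mul_neg]
  gcongr
  exact (Real.exp_le_exp.2 habs).trans (Real.exp_abs_le _)

theorem hasFDerivAt_powKernel_of_ne_zero {z : ℂ} (hz : z ≠ 0) :
    HasFDerivAt (powKernel s m) (powKernelFDeriv s m z) z := by
  have hpos : 0 < ‖z‖ ^ 2 := pow_pos (norm_pos_iff.2 hz) 2
  have hsq : HasFDerivAt (fun w : ℂ => ((‖w‖ ^ 2 : ℝ) : ℂ))
      (Complex.ofRealCLM.comp (2 • innerSL ℝ z)) z :=
    Complex.ofRealCLM.hasFDerivAt.comp z (hasStrictFDerivAt_norm_sq z).hasFDerivAt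
  have hcpow := ((hasDerivAt_id ((‖z‖ ^ 2 : ℝ) : ℂ)).cpow_const (c := s)
    (Complex.ofReal_mem_slitPlane.2 hpos)).complexToReal_fderiv.comp z hsq
  have hzpow := (hasDerivAt_zpow (-m) z (.inl hz)).complexToReal_fderiv
  refine (hcpow.mul hzpow).congr_fderiv (ContinuousLinearMap.ext fun v => ?_)
  have hinner : ((2 * inner ℝ z v : ℝ) : ℂ) = conj z * v + z * conj v := by
    rw [Complex.inner, Complex.ofReal_mul, Complex.re_eq_add_conj, map_mul, Complex.conj_conj]
    push_cast
    ring
  have hsucc : ((‖z‖ ^ 2 : ℝ) : ℂ) ^ s = ((‖z‖ ^ 2 : ℝ) : ℂ) ^ (s - 1) * (conj z * z) := by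
    have hne : ((‖z‖ ^ 2 : ℝ) : ℂ) ≠ 0 := by exact_mod_cast hpos.ne'
    rw [Complex.conj_mul', ← Complex.ofReal_pow, Complex.cpow_sub _ _ hne, Complex.cpow_one,
      div_mul_cancel₀ _ hne]
  calc
    _ = ((‖z‖ ^ 2 : ℝ) : ℂ) ^ s * (-m * z ^ (-m - 1) * v) +
        z ^ (-m) * (s * ((‖z‖ ^ 2 : ℝ) : ℂ) ^ (s - 1) * (2 * inner ℝ z v : ℝ)) := by
          simp [mul_add]
    _ = powKernelFDeriv s m z v := by
      rw [powKernelFDeriv_apply, powKernel, powKernel, hinner, hsucc, neg_sub', neg_add,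
        zpow_add₀ hz, zpow_sub₀ hz, zpow_sub₀ hz, zpow_neg_one, zpow_one]
      field_simp
      ring

variable {s m}

theorem locallyIntegrable_powKernel (h : (m : ℝ) / 2 - 1 < s.re) :
    LocallyIntegrable (powKernel s m) := by
  refine locallyIntegrable_of_norm_le_rpow (C := 1) (α := m - 2 * s.re) ?_ ?_
    (.of_forall fun z => ?_) (by fun_prop)
  · simp [Complex.finrank_real_complex]
  · rw [Complex.finrank_real_complex, Nat.cast_ofNat]
    linarith
  · rw [one_mul, neg_sub]
    exact norm_powKernel_le s m z

theorem powKernel_apply_zero (h : (m : ℝ) < 2 * s.re) : powKernel s m 0 = 0 := by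
  have hle := norm_powKernel_le s m 0
  rwa [norm_zero, Real.zero_rpow (by linarith), norm_le_zero_iff] at hle

theorem continuous_powKernel (h : (m : ℝ) < 2 * s.re) : Continuous (powKernel s m) := by
  refine continuous_iff_continuousAt.2 fun z => ?_
  rcases eq_or_ne z 0 with rfl | hz
  · rw [ContinuousAt, powKernel_apply_zero h]
    have hp : 0 < 2 * s.re - m := by linarith
    refine squeeze_zero_norm (norm_powKernel_le s m) ?_
    simpa [Real.zero_rpow hp.ne'] using
      (continuous_norm.rpow_const (p := 2 * s.re - m) fun _ => .inr hp.le).tendsto (0 : ℂ)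
  · exact (hasFDerivAt_powKernel_of_ne_zero s m hz).continuousAt

theorem hasFDerivAt_powKernel (h : (m : ℝ) + 1 < 2 * s.re) (z : ℂ) :
    HasFDerivAt (powKernel s m) (powKernelFDeriv s m z) z := by
  rcases eq_or_ne z 0 with rfl | hz
  · have hp : 1 < 2 * s.re - m := by linarith
    have hz : powKernel s (m + 1) 0 = 0 := powKernel_apply_zero (by push_cast; linarith)
    have hzbar : powKernel (s - 1) (m - 1) 0 = 0 :=
      powKernel_apply_zero (by rw [Complex.sub_re, Complex.one_re]; push_cast; linarith)
    have hderiv : powKernelFDeriv s m 0 = 0 := by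
      ext v
      simp [powKernelFDeriv_apply, hz, hzbar]
    have hnorm := (hasFDerivAt_norm_rpow (0 : ℂ) hp).isLittleO
    rw [hderiv]
    refine .of_isLittleO ((Asymptotics.IsBigO.of_norm_le fun v => ?_).trans_isLittleO hnorm)
    simpa [powKernel_apply_zero (s := s) (m := m) (by linarith),
      Real.zero_rpow (zero_lt_one.trans hp).ne'] using norm_powKernel_le s m v
  · exact hasFDerivAt_powKernel_of_ne_zero s m hz

theorem contDiff_one_powKernel (h : (m : ℝ) + 1 < 2 * s.re) : ContDiff ℝ 1 (powKernel s m) := by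
  refine contDiff_one_iff_hasFDerivAt.2 ⟨_, ?_, hasFDerivAt_powKernel h⟩
  have hz : Continuous (powKernel s (m + 1)) := continuous_powKernel (by push_cast; linarith)
  have hzbar : Continuous (powKernel (s - 1) (m - 1)) :=
    continuous_powKernel (by rw [Complex.sub_re, Complex.one_re]; push_cast; linarith)
  unfold powKernelFDeriv
  fun_prop

end PowKernel

section Dbar

open MeasureTheory

variable {ι : Type*} [DecidableEq ι] {f g : (ι → ℂ) → ℂ} {k : ι}

/-- The Wirtinger derivative `∂f/∂z̄_k = (∂f/∂x_k + i ∂f/∂y_k) / 2`. -/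
noncomputable def dbar [Fintype ι] (k : ι) (f : (ι → ℂ) → ℂ) (z : ι → ℂ) : ℂ :=
  (fderiv ℝ f z (Pi.single k 1) + Complex.I * fderiv ℝ f z (Pi.single k Complex.I)) / 2

variable [Fintype ι]

theorem contDiff_dbar {n p : WithTop ℕ∞} (hf : ContDiff ℝ n f) (hpn : p + 1 ≤ n) :
    ContDiff ℝ p (dbar k f) := by
  have hderiv : ∀ v, ContDiff ℝ p fun z => fderiv ℝ f z v := fun v =>
    (hf.fderiv_right hpn).clm_apply contDiff_const
  exact ((hderiv _).add (contDiff_const.mul (hderiv _))).div_const 2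

theorem hasCompactSupport_dbar (hf : HasCompactSupport f) : HasCompactSupport (dbar k f) :=
  (hf.fderiv ℝ).comp_left (g := fun A : (ι → ℂ) →L[ℝ] ℂ =>
    (A (Pi.single k 1) + Complex.I * A (Pi.single k Complex.I)) / 2) (by simp)

theorem integral_mul_dbar (hf : ContDiff ℝ 1 f) (hg : ContDiff ℝ 1 g)
    (hsupp : HasCompactSupport g) :
    ∫ z, f z * dbar k g z = -∫ z, dbar k f z * g z := by
  have hf' : ∀ v, Continuous fun z => fderiv ℝ f z v := fun v =>
    (hf.continuous_fderiv one_ne_zero).clm_apply continuous_const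
  have hg' : ∀ v, Continuous fun z => fderiv ℝ g z v := fun v =>
    (hg.continuous_fderiv one_ne_zero).clm_apply continuous_const
  have hintf : ∀ v, Integrable fun z => fderiv ℝ f z v * g z := fun v =>
    ((hf' v).mul hg.continuous).integrable_of_hasCompactSupport hsupp.mul_left
  have hintg : ∀ v, Integrable fun z => f z * fderiv ℝ g z v := fun v =>
    (hf.continuous.mul (hg' v)).integrable_of_hasCompactSupport (hsupp.fderiv_apply ℝ v).mul_left
  have hparts : ∀ v, ∫ z, f z * fderiv ℝ g z v = -∫ z, fderiv ℝ f z v * g z := fun v =>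
    integral_mul_fderiv_eq_neg_fderiv_mul_of_integrable (hintf v) (hintg v)
      ((hf.continuous.mul hg.continuous).integrable_of_hasCompactSupport hsupp.mul_left)
      (fun z _ => hf.differentiable one_ne_zero z) fun z _ => hg.differentiable one_ne_zero z
  calc ∫ z, f z * dbar k g z
      = ∫ z, (f z * fderiv ℝ g z (Pi.single k 1) +
          Complex.I * (f z * fderiv ℝ g z (Pi.single k Complex.I))) / 2 := by
        congr with z; rw [dbar]; ring
    _ = -∫ z, (fderiv ℝ f z (Pi.single k 1) * g z +
          Complex.I * (fderiv ℝ f z (Pi.single k Complex.I) * g z)) / 2 := by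
        rw [integral_div, integral_div, integral_add (hintg _) ((hintg _).const_mul _),
          integral_add (hintf _) ((hintf _).const_mul _), integral_const_mul, integral_const_mul,
          hparts, hparts]
        ring
    _ = -∫ z, dbar k f z * g z := by
        congr with z; rw [dbar]; ring

end Dbar

section MonomialKernel

open MeasureTheory

variable {ι : Type*} [Fintype ι]

/-- The tensor-product kernel `∏ k, |z_k|^{2 s_k} z_k^{-m_k}` on `ℂ^ι`. -/
noncomputable def monomialKernel (s : ι → ℂ) (m : ι → ℤ) (z : ι → ℂ) : ℂ :=
  ∏ k, powKernel (s k) (m k) (z k)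

/-- The linear form `t ↦ ∑ k, log |z_k|² t_k`, whose exponential is the factor by which
`monomialKernel` changes when `t` is added to its exponents. -/
noncomputable def logForm (z : ι → ℂ) : (ι → ℂ) →L[ℂ] ℂ :=
  ∑ k, (Real.log (‖z k‖ ^ 2) : ℂ) • ContinuousLinearMap.proj k

theorem logForm_apply (z t : ι → ℂ) : logForm z t = ∑ k, Real.log (‖z k‖ ^ 2) * t k := by
  simp [logForm]

theorem norm_logForm_le (z : ι → ℂ) : ‖logForm z‖ ≤ ∑ k, |Real.log (‖z k‖ ^ 2)| := by
  refine ContinuousLinearMap.opNorm_le_bound _ (by positivity) fun t => ?_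
  rw [logForm_apply, Finset.sum_mul]
  refine norm_sum_le_of_le _ fun k _ => ?_
  rw [norm_mul, Complex.norm_real, Real.norm_eq_abs]
  gcongr
  exact norm_le_pi_norm t k

@[fun_prop]
theorem measurable_logForm : Measurable (logForm : (ι → ℂ) → (ι → ℂ) →L[ℂ] ℂ) := by
  unfold logForm
  fun_prop

theorem monomialKernel_add_left (s t : ι → ℂ) (m : ι → ℤ) {z : ι → ℂ} (hz : ∀ k, z k ≠ 0) :
    monomialKernel (s + t) m z = Complex.exp (logForm z t) * monomialKernel s m z := by
  simp only [monomialKernel, logForm_apply, Complex.exp_sum, ← Finset.prod_mul_distrib]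
  exact Finset.prod_congr rfl fun k _ => powKernel_add_left (s k) (m k) (t k) (hz k)

theorem exp_mul_norm_logForm_mul_norm_monomialKernel_le (s : ι → ℂ) (m : ι → ℤ) {r : ℝ}
    (hr : 0 ≤ r) {z : ι → ℂ} (hz : ∀ k, z k ≠ 0) :
    Real.exp (r * ‖logForm z‖) * ‖monomialKernel s m z‖ ≤
      ∏ k, (‖powKernel (s k + r) (m k) (z k)‖ + ‖powKernel (s k - r) (m k) (z k)‖) :=
  calc Real.exp (r * ‖logForm z‖) * ‖monomialKernel s m z‖
      ≤ Real.exp (r * ∑ k, |Real.log (‖z k‖ ^ 2)|) * ‖monomialKernel s m z‖ := by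
        gcongr; exact norm_logForm_le z
    _ = ∏ k, Real.exp (r * |Real.log (‖z k‖ ^ 2)|) * ‖powKernel (s k) (m k) (z k)‖ := by
        rw [monomialKernel, norm_prod, Finset.mul_sum, Real.exp_sum, Finset.prod_mul_distrib]
    _ ≤ _ := Finset.prod_le_prod (fun _ _ => by positivity) fun k _ =>
        exp_mul_abs_log_mul_norm_powKernel_le (s k) (m k) r (hz k)

variable {s : ι → ℂ} {m : ι → ℤ}

theorem locallyIntegrable_monomialKernel (hs : s ∈ rightOrthant fun k => (m k : ℝ) / 2 - 1) :
    LocallyIntegrable (monomialKernel s m) :=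
  locallyIntegrable_fintypeProd fun k => locallyIntegrable_powKernel (hs k)

theorem contDiff_one_monomialKernel (h : ∀ j, (m j : ℝ) + 1 < 2 * (s j).re) :
    ContDiff ℝ 1 (monomialKernel s m) :=
  contDiff_prod fun k _ => (contDiff_one_powKernel (h k)).comp (contDiff_apply ℝ ℂ k)

theorem fderiv_monomialKernel_single [DecidableEq ι] (h : ∀ j, (m j : ℝ) + 1 < 2 * (s j).re)
    (k : ι) (z : ι → ℂ) (v : ℂ) :
    fderiv ℝ (monomialKernel s m) z (Pi.single k v) =
      powKernelFDeriv (s k) (m k) (z k) v *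
        ∏ j ∈ Finset.univ.erase k, powKernel (s j) (m j) (z j) := by
  have hfderiv : HasFDerivAt (monomialKernel s m)
      (∑ i, (∏ j ∈ Finset.univ.erase i, powKernel (s j) (m j) (z j)) •
        (powKernelFDeriv (s i) (m i) (z i)).comp (.proj i)) z :=
    HasFDerivAt.finsetProd fun i _ => HasFDerivAt.comp (g := powKernel (s i) (m i))
      (f := fun w : ι → ℂ => w i) z (hasFDerivAt_powKernel (h i) (z i)) (hasFDerivAt_apply i z)
  rw [hfderiv.fderiv, sum_apply, Finset.sum_eq_single k]
  · simp [mul_comm]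
  · intro i _ hi
    simp [hi]
  · simp

theorem dbar_monomialKernel [DecidableEq ι] (h : ∀ j, (m j : ℝ) + 1 < 2 * (s j).re) (k : ι)
    (z : ι → ℂ) :
    dbar k (monomialKernel s m) z =
      s k * monomialKernel (s - Pi.single k 1) (m - Pi.single k 1) z := by
  set P := ∏ j ∈ Finset.univ.erase k, powKernel (s j) (m j) (z j) with hP
  have hshift : monomialKernel (s - Pi.single k 1) (m - Pi.single k 1) z =
      powKernel (s k - 1) (m k - 1) (z k) * P := by
    rw [monomialKernel, ← Finset.mul_prod_erase _ _ (Finset.mem_univ k), hP]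
    congr 1
    · simp
    · exact Finset.prod_congr rfl fun j hj => by simp [Finset.ne_of_mem_erase hj]
  rw [dbar, fderiv_monomialKernel_single h, fderiv_monomialKernel_single h, powKernelFDeriv_apply,
    powKernelFDeriv_apply, hshift, map_one, Complex.conj_I]
  linear_combination ((s k - m k) * powKernel (s k) (m k + 1) (z k) -
    s k * powKernel (s k - 1) (m k - 1) (z k)) / 2 * P * Complex.I_mul_I

end MonomialKernel

section ZetaIntegral

open MeasureTheory

variable {ι : Type*} [Fintype ι] {φ : (ι → ℂ) → ℂ} {m : ι → ℤ} {s : ι → ℂ}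

/-- The zeta integral `∫ ∏ k, |z_k|^{2 s_k} z_k^{-m_k} φ(z) dV(z)`, as a function of `s`. -/
noncomputable def zetaIntegral (φ : (ι → ℂ) → ℂ) (m : ι → ℤ) (s : ι → ℂ) : ℂ :=
  ∫ z, monomialKernel s m z * φ z

theorem integrable_monomialKernel_mul (hφ : Continuous φ) (hsupp : HasCompactSupport φ)
    (hs : s ∈ rightOrthant fun k => (m k : ℝ) / 2 - 1) :
    Integrable fun z => monomialKernel s m z * φ z :=
  (locallyIntegrable_monomialKernel hs).integrable_smul_right_of_hasCompactSupport hφ hsupp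

theorem integrable_exp_norm_logForm_mul (hφ : Continuous φ) (hsupp : HasCompactSupport φ)
    {r : ℝ} (hr : 0 ≤ r) (hs : ∀ k, (m k : ℝ) / 2 - 1 < (s k).re - r) :
    Integrable fun z : ι → ℂ => Real.exp (r * ‖logForm z‖) * ‖monomialKernel s m z * φ z‖ := by
  have hbound : LocallyIntegrable fun z : ι → ℂ =>
      ∏ k, (‖powKernel (s k + r) (m k) (z k)‖ + ‖powKernel (s k - r) (m k) (z k)‖) := by
    have hnorm : ∀ (k : ι) (t : ℂ), (m k : ℝ) / 2 - 1 < t.re →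
        LocallyIntegrable fun w => ‖powKernel t (m k) w‖ :=
      fun k t ht w => (locallyIntegrable_powKernel ht w).norm
    refine locallyIntegrable_fintypeProd fun k => (hnorm k _ ?_).add (hnorm k _ ?_)
    · simpa using by linarith [hs k]
    · simpa using hs k
  have hint : Integrable fun z => monomialKernel s m z * φ z :=
    integrable_monomialKernel_mul hφ hsupp fun k => (hs k).trans_le (sub_le_self _ hr)
  refine (hbound.integrable_smul_right_of_hasCompactSupport hφ.norm hsupp.norm).mono'
    (.mul (by fun_prop) hint.aestronglyMeasurable.norm) ?_
  filter_upwards [ae_forall_eval_ne (μ := fun _ : ι => volume) 0] with z hz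
  rw [Real.norm_of_nonneg (by positivity), norm_mul, ← mul_assoc, smul_eq_mul]
  gcongr
  exact exp_mul_norm_logForm_mul_norm_monomialKernel_le s m hr hz

theorem analyticOnNhd_zetaIntegral (hφ : Continuous φ) (hsupp : HasCompactSupport φ) :
    AnalyticOnNhd ℂ (zetaIntegral φ m) (rightOrthant fun k => (m k : ℝ) / 2 - 1) := by
  intro s hs
  obtain ⟨r, hr, hsr⟩ := exists_pos_forall_lt_re_sub hs
  have hlaplace : AnalyticAt ℂ
      (fun t => ∫ z, Complex.exp (logForm z t) • (monomialKernel s m z * φ z)) 0 :=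
    analyticAt_integral_exp_clm_smul measurable_logForm.aestronglyMeasurable
      (integrable_monomialKernel_mul hφ hsupp hs).aestronglyMeasurable hr
      (integrable_exp_norm_logForm_mul hφ hsupp hr.le hsr)
  have hshift : zetaIntegral φ m =
      fun t => ∫ z, Complex.exp (logForm z (t - s)) • (monomialKernel s m z * φ z) := by
    funext t
    refine integral_congr_ae ?_
    filter_upwards [ae_forall_eval_ne (μ := fun _ : ι => volume) 0] with z hz
    rw [smul_eq_mul, ← mul_assoc, ← monomialKernel_add_left s _ m hz, add_sub_cancel]
  rw [hshift]
  exact AnalyticAt.fun_comp_of_eq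
    (g := fun t => ∫ z, Complex.exp (logForm z t) • (monomialKernel s m z * φ z))
    (f := fun t => t - s) hlaplace (by fun_prop) (sub_self s)

theorem analyticOnNhd_apply_add_one (k : ι) (U : Set (ι → ℂ)) :
    AnalyticOnNhd ℂ (fun s => s k + 1) U :=
  ((ContinuousLinearMap.proj k : (ι → ℂ) →L[ℂ] ℂ).analyticOnNhd U).add analyticOnNhd_const

variable [DecidableEq ι]

theorem zetaIntegral_dbar_of_large (hφ : ContDiff ℝ 1 φ) (hsupp : HasCompactSupport φ) (k : ι)
    (hs : s ∈ rightOrthant fun j => ((m j : ℝ) + 1) / 2) :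
    zetaIntegral (dbar k φ) (m + Pi.single k 1) (s + Pi.single k 1) =
      -((s k + 1) * zetaIntegral φ m s) := by
  have hlarge : s + Pi.single k 1 ∈ rightOrthant fun j =>
      (((m + Pi.single k 1 : ι → ℤ) j : ℝ) + 1) / 2 :=
    add_single_mem_rightOrthant hs
      (by rw [Pi.add_apply, Pi.single_eq_same]; push_cast; linarith) fun j hj => by simp [hj]
  have hC1 : ∀ j, ((m + Pi.single k 1 : ι → ℤ) j : ℝ) + 1 <
      2 * ((s + Pi.single k 1 : ι → ℂ) j).re :=
    fun j => by linarith [hlarge j]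
  rw [zetaIntegral, integral_mul_dbar (contDiff_one_monomialKernel hC1) hφ hsupp]
  simp only [dbar_monomialKernel hC1, add_sub_cancel_right, mul_assoc, integral_const_mul,
    Pi.add_apply, Pi.single_eq_same, zetaIntegral]

theorem zetaIntegral_dbar (hφ : ContDiff ℝ 1 φ) (hsupp : HasCompactSupport φ) (k : ι)
    (hs : s ∈ rightOrthant fun j => (m j : ℝ) / 2 - 1) :
    zetaIntegral (dbar k φ) (m + Pi.single k 1) (s + Pi.single k 1) =
      -((s k + 1) * zetaIntegral φ m s) := by
  have hleft : AnalyticOnNhd ℂ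
      (fun t => zetaIntegral (dbar k φ) (m + Pi.single k 1) (t + Pi.single k 1))
      (rightOrthant fun j => (m j : ℝ) / 2 - 1) :=
    (analyticOnNhd_zetaIntegral (contDiff_dbar hφ (zero_add 1).le).continuous
      (hasCompactSupport_dbar hsupp)).comp (f := fun t => t + Pi.single k 1)
      (fun _ _ => by fun_prop) fun t ht =>
        add_single_mem_rightOrthant ht
          (by rw [Pi.add_apply, Pi.single_eq_same]; push_cast; linarith) fun j hj => by simp [hj]
  have hright : AnalyticOnNhd ℂ (fun t : ι → ℂ => -((t k + 1) * zetaIntegral φ m t))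
      (rightOrthant fun j => (m j : ℝ) / 2 - 1) :=
    (AnalyticOnNhd.mul (analyticOnNhd_apply_add_one k _)
      (analyticOnNhd_zetaIntegral hφ.continuous hsupp)).neg
  have hbase : (fun j => (m j : ℂ) / 2 + 1) ∈ rightOrthant fun j => ((m j : ℝ) + 1) / 2 :=
    fun j => by
      simp only [Complex.add_re, Complex.div_ofNat_re, Complex.intCast_re, Complex.one_re]
      linarith
  refine hleft.eqOn_of_preconnected_of_eventuallyEq hright (convex_rightOrthant _).isPreconnected
    (rightOrthant_anti (fun j => by linarith) hbase) ?_ hs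
  filter_upwards [(isOpen_rightOrthant _).mem_nhds hbase] with t ht
  exact zetaIntegral_dbar_of_large hφ hsupp k ht

end ZetaIntegral

section Continuation

open MeasureTheory

variable {ι : Type*} [Fintype ι] {φ : (ι → ℂ) → ℂ}

theorem add_one_ne_zero_of_neg_one_lt_re {z : ℂ} (hz : -1 < z.re) : z + 1 ≠ 0 := fun h => by
  rw [eq_neg_of_add_eq_zero_left h, Complex.neg_re, Complex.one_re] at hz
  exact hz.false

theorem exists_analyticOnNhd_eqOn_zetaIntegral [DecidableEq ι] (N : Multiset ι)
    (hφ : ContDiff ℝ N.card φ) (hsupp : HasCompactSupport φ) (m : ι → ℤ) :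
    ∃ g : (ι → ℂ) → ℂ,
      AnalyticOnNhd ℂ g (rightOrthant fun j => max (-1) (((m j : ℝ) - N.count j) / 2 - 1)) ∧
      Set.EqOn g (zetaIntegral φ m) (rightOrthant fun j => max (-1) ((m j : ℝ) / 2 - 1)) := by
  induction N using Multiset.induction_on generalizing φ m with
  | empty =>
    refine ⟨zetaIntegral φ m, ?_, Set.eqOn_refl _ _⟩
    refine (analyticOnNhd_zetaIntegral hφ.continuous hsupp).mono (rightOrthant_anti fun j => ?_)
    simp
  | cons k N ih =>
    obtain ⟨g, hg, hgz⟩ := ih (contDiff_dbar (k := k) hφ (by simp)) (hasCompactSupport_dbar hsupp)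
      (m + Pi.single k 1)
    refine ⟨fun s => -(s k + 1)⁻¹ * g (s + Pi.single k 1), ?_, fun s hs => ?_⟩
    · refine AnalyticOnNhd.mul (.neg (.inv (analyticOnNhd_apply_add_one k _) fun s hs => ?_))
        (hg.comp (f := fun s => s + Pi.single k 1) (fun _ _ => by fun_prop) fun s hs => ?_)
      · exact add_one_ne_zero_of_neg_one_lt_re (max_lt_iff.1 (hs k)).1
      · refine add_single_mem_rightOrthant hs ?_ fun j hj => by simp [hj]
        rw [← max_add_add_right]
        refine max_le_max (by norm_num) ?_
        rw [Pi.add_apply, Pi.single_eq_same, Multiset.count_cons_self]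
        push_cast
        linarith
    · have hmem : s + Pi.single k 1 ∈ rightOrthant fun j =>
          max (-1) (((m + Pi.single k 1 : ι → ℤ) j : ℝ) / 2 - 1) := by
        refine add_single_mem_rightOrthant hs ?_ fun j hj => by simp [hj]
        rw [← max_add_add_right]
        refine max_le_max (by norm_num) ?_
        rw [Pi.add_apply, Pi.single_eq_same]
        push_cast
        linarith
      have hne : s k + 1 ≠ 0 := add_one_ne_zero_of_neg_one_lt_re (max_lt_iff.1 (hs k)).1
      have hs' := rightOrthant_anti (fun j => le_max_right (-1) ((m j : ℝ) / 2 - 1)) hs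
      have hφ₁ : ContDiff ℝ 1 φ := hφ.of_le (by simp)
      simp only [hgz hmem, zetaIntegral_dbar hφ₁ hsupp k hs']
      rw [neg_mul_neg, inv_mul_cancel_left₀ hne]

theorem stmt8_general (m : ι → ℕ) (hφ : ContDiff ℝ (∑ k, m k : ℕ) φ)
    (hsupp : HasCompactSupport φ) :
    ∃ g : (ι → ℂ) → ℂ, AnalyticOnNhd ℂ g {s | ∀ k, -1 < (s k).re} ∧
      ∀ s : ι → ℂ, (∀ k, (m k : ℝ) / 2 - 1 < (s k).re) →
        Integrable (fun z : ι → ℂ =>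
          (∏ k, ((‖z k‖ ^ 2 : ℝ) : ℂ) ^ (s k) * (z k) ^ (-(m k : ℤ))) * φ z) ∧
        g s = ∫ z : ι → ℂ,
          (∏ k, ((‖z k‖ ^ 2 : ℝ) : ℂ) ^ (s k) * (z k) ^ (-(m k : ℤ))) * φ z := by
  classical
  obtain ⟨g, hg, hgz⟩ := exists_analyticOnNhd_eqOn_zetaIntegral
    (∑ k, Multiset.replicate (m k) k) (by simpa using hφ) hsupp (fun k => m k)
  refine ⟨g, hg.mono (rightOrthant_anti fun j => ?_), fun s hs =>
    ⟨integrable_monomialKernel_mul hφ.continuous hsupp fun k => ?_, hgz fun k => ?_⟩⟩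
  · simp [Multiset.count_sum', Multiset.count_replicate]
  · simpa using hs k
  · simpa using ⟨by linarith [hs k, (m k).cast_nonneg (α := ℝ)], hs k⟩

end Continuation

open MeasureTheory in
/-- tensor-product analytic continuation of
`s ↦ ∫_{ℂ^n} ∏_k |z_k|^{2s_k} z_k^{-m_k} φ(z) dV(z)` to `{Re s_k > -δ ∀k}`,
with value `∫ φ` at `s = 0` when all `m_k = 0`. -/
theorem stmt8 (n : ℕ) (hn : 1 ≤ n)
    (φ : (Fin n → ℂ) → ℂ) (hφ : ContDiff ℝ (⊤ : ℕ∞) φ) (hsupp : HasCompactSupport φ)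
    (m : Fin n → ℕ) :
    ∃ δ > (0 : ℝ), ∃ g : (Fin n → ℂ) → ℂ,
      AnalyticOnNhd ℂ g {s : Fin n → ℂ | ∀ k, -δ < (s k).re} ∧
      (∀ s : Fin n → ℂ, (∀ k, (m k : ℝ) / 2 < (s k).re) →
        Integrable (fun z : Fin n → ℂ =>
          (∏ k, ((‖z k‖ ^ 2 : ℝ) : ℂ) ^ (s k) * (z k) ^ (-(m k : ℤ))) * φ z) ∧
        g s = ∫ z : Fin n → ℂ,
          (∏ k, ((‖z k‖ ^ 2 : ℝ) : ℂ) ^ (s k) * (z k) ^ (-(m k : ℤ))) * φ z) ∧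
      ((∀ k, m k = 0) → g 0 = ∫ z : Fin n → ℂ, φ z) := by
  obtain ⟨g, hg, hgs⟩ := stmt8_general m (hφ.of_le (by exact_mod_cast le_top)) hsupp
  refine ⟨1, one_pos, g, hg, fun s hs => hgs s fun k => by linarith [hs k], fun hm => ?_⟩
  simpa [hm] using (hgs 0 fun k => by simp [hm k]).2
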